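/- Assume SSCP and SLS, and let t_l < t'_l < t_r < t'_r in T. Suppose (x̄_l, x̄_r) is the greatest element of E(t_l,t_r), (ȳ_l, ȳ_r) is the greatest element of E(t'_l,t_r), and (z̄_l, z̄_r) is the greatest element of E(t_l,t'_r) (coordinatewise order). Then ȳ_l ≥ x̄_l and z̄_r ≥ x̄_r: the greatest equilibrium platforms are increasing in the candidates' ideal policies. -/

import Mathlib

/-!
The expected payoff is symmetric in the two platforms, so both candidates share one best-response
correspondence. A best response to a platform `y ≠ t` lies strictly on the ideal point's side of
`y` and not beyond `t` (`br_above`, `br_below`); hence in equilibrium `t_l ≤ x_l < x_r ≤ t_r`.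
On that range SSCP makes every selection of best responses increasing in the opponent's platform
(`brL_mono`, `brR_mono`), and SLS makes best responses increasing in one's own ideal point
(`brL_mono_ideal`, `brR_mono_ideal`).

Starting from the greatest equilibrium of the low game, raise one ideal point and compose two
best-response selections, the one for the candidate whose ideal point is unchanged being taken
to pass through the old equilibrium. The composition is a monotone self-map of an interval whose
left end is an old equilibrium platform, so it has a fixed point there (`exists_fixed_mono`, the
argument of Tarski), which is an equilibrium platform of the new game above the old one.
When the left ideal point is raised to `t_l' ≥ x_l` this construction may be unavailable, but then
`t_l'` already bounds the new left platform from below.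
-/

open Set

/-- The policy space `T = [0,1] ⊆ ℝ`. -/
def T : Set ℝ := Set.Icc 0 1

/-- Hypotheses on the beliefs `F` about the median voter's ideal policy:
continuous, strictly increasing on `T`, with values in `[0,1]` (full support). -/
def Fhyp (F : ℝ → ℝ) : Prop :=
  ContinuousOn F T ∧ StrictMonoOn F T ∧ ∀ x ∈ T, 0 ≤ F x ∧ F x ≤ 1

/-- The probability that candidate `l` wins given platforms `xl, xr`. -/
noncomputable def P (F : ℝ → ℝ) (xl xr : ℝ) : ℝ :=
  if xl < xr then F ((xl + xr) / 2)
  else if xl = xr then 1 / 2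
  else 1 - F ((xl + xr) / 2)

/-- Hypotheses on the payoff `u x t`: jointly continuous on `T × T`, strictly
concave in the platform, and uniquely maximized at the ideal policy. -/
def uhyp (u : ℝ → ℝ → ℝ) : Prop :=
  ContinuousOn (fun p : ℝ × ℝ => u p.1 p.2) (T ×ˢ T) ∧
  (∀ t ∈ T, StrictConcaveOn ℝ T (fun x => u x t)) ∧
  (∀ t ∈ T, ∀ x ∈ T, x ≠ t → u x t < u t t)

/-- Expected payoff of a candidate with ideal policy `t` given platforms `xl, xr`. -/
noncomputable def U (F : ℝ → ℝ) (u : ℝ → ℝ → ℝ) (t xl xr : ℝ) : ℝ :=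
  P F xl xr * u xl t + (1 - P F xl xr) * u xr t

/-- Best-response set of candidate `l` with ideal policy `t` to opponent platform `x`. -/
def brL (F : ℝ → ℝ) (u : ℝ → ℝ → ℝ) (t x : ℝ) : Set ℝ :=
  {y ∈ T | ∀ z ∈ T, U F u t z x ≤ U F u t y x}

/-- Best-response set of candidate `r` with ideal policy `t` to opponent platform `x`. -/
def brR (F : ℝ → ℝ) (u : ℝ → ℝ → ℝ) (t x : ℝ) : Set ℝ :=
  {y ∈ T | ∀ z ∈ T, U F u t x z ≤ U F u t x y}

/-- The set of Nash equilibria given ideal policies `tl, tr`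
(ordered coordinatewise via the product order on `ℝ × ℝ`). -/
def E (F : ℝ → ℝ) (u : ℝ → ℝ → ℝ) (tl tr : ℝ) : Set (ℝ × ℝ) :=
  {p | p.1 ∈ brL F u tl p.2 ∧ p.2 ∈ brR F u tr p.1}

/-- Strict single crossing property (SSCP). -/
def SSCP (F : ℝ → ℝ) (u : ℝ → ℝ → ℝ) : Prop :=
  ∀ t x x' y y' t' : ℝ, t ∈ T → x ∈ T → x' ∈ T → y ∈ T → y' ∈ T → t' ∈ T →
    t ≤ x → x < x' → x' < y → y < y' → y' ≤ t' →
    (U F u t x' y ≥ U F u t x y → U F u t x' y' > U F u t x y') ∧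
    (U F u t' x' y ≥ U F u t' x' y' → U F u t' x y > U F u t' x y')

/-- Strict log supermodularity (SLS). -/
def SLS (u : ℝ → ℝ → ℝ) : Prop :=
  ∀ t t' x x' y : ℝ, t ∈ T → t' ∈ T → x ∈ T → x' ∈ T → y ∈ T →
    ((t < t' ∧ t' ≤ x ∧ x < x' ∧ x' < y) ∨ (y < x ∧ x < x' ∧ x' ≤ t ∧ t < t')) →
    (u x' t' - u y t') / (u x t' - u y t') > (u x' t - u y t) / (u x t - u y t)

/-- The expected policy function. -/
noncomputable def pol (F : ℝ → ℝ) (xl xr : ℝ) : ℝ :=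
  P F xl xr * xl + (1 - P F xl xr) * xr

/-! ### Payoffs and winning probabilities -/

lemma P_symm (F : ℝ → ℝ) (x y : ℝ) : P F x y = 1 - P F y x := by
  unfold P
  rw [add_comm y x]
  rcases lt_trichotomy x y with h | h | h
  · simp [h, h.not_gt, h.ne']
  · subst h; norm_num
  · simp [h, h.not_gt, h.ne']

/-- Only the pair of platforms matters for the payoff, not which candidate proposes which. -/
lemma U_symm (F : ℝ → ℝ) (u : ℝ → ℝ → ℝ) (t x y : ℝ) : U F u t x y = U F u t y x := by
  unfold U
  rw [P_symm F x y]; ring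

lemma brR_eq (F : ℝ → ℝ) (u : ℝ → ℝ → ℝ) (t x : ℝ) : brR F u t x = brL F u t x := by
  unfold brR brL
  simp only [U_symm F u t x]

lemma U_eq (F : ℝ → ℝ) (u : ℝ → ℝ → ℝ) (t x y : ℝ) :
    U F u t x y = u y t + P F x y * (u x t - u y t) := by
  unfold U; ring

/-- Winning probabilities are nondegenerate at distinct platforms: the midpoint of two distinct
points of `T` is interior to `T`, where `0 < F < 1`. -/
lemma P_pos {F : ℝ → ℝ} (hF : Fhyp F) {x y : ℝ} (hx : x ∈ T) (hy : y ∈ T) (h : x ≠ y) :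
    0 < P F x y := by
  obtain ⟨-, hm, hb⟩ := hF
  have h0 : (0 : ℝ) ∈ T := by simp [T]
  have h1 : (1 : ℝ) ∈ T := by simp [T]
  have hxy : (x + y) / 2 ∈ T := by
    simp only [T, mem_Icc] at *; constructor <;> linarith
  have e0 := (hb 0 h0).1
  have e1 := (hb 1 h1).2
  simp only [T, mem_Icc] at hx hy
  unfold P
  rcases lt_or_gt_of_ne h with h | h
  · have := hm h0 hxy (by linarith)
    simp only [h, if_true]; linarith
  · have := hm hxy h1 (by linarith)
    simp only [h.not_gt, h.ne', if_false]; linarith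

lemma u_right {u : ℝ → ℝ → ℝ} (hu : uhyp u) {t x y : ℝ} (ht : t ∈ T) (hy : y ∈ T)
    (h1 : t ≤ x) (h2 : x < y) : u y t < u x t := by
  have hp := hu.2.2 t ht y hy (by intro h; linarith)
  rcases h1.eq_or_lt with h | h
  · rwa [← h]
  · have := (hu.2.1 t ht).lt_on_openSegment ht hy (by linarith) (z := x)
      (by rw [openSegment_eq_Ioo (h.trans h2)]; exact ⟨h, h2⟩)
    simpa [min_eq_right hp.le] using this

lemma u_left {u : ℝ → ℝ → ℝ} (hu : uhyp u) {t x y : ℝ} (ht : t ∈ T) (hy : y ∈ T)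
    (h1 : y < x) (h2 : x ≤ t) : u y t < u x t := by
  have hp := hu.2.2 t ht y hy (by intro h; linarith)
  rcases h2.eq_or_lt with h | h
  · rwa [h]
  · have := (hu.2.1 t ht).lt_on_openSegment hy ht (by linarith) (z := x)
      (by rw [openSegment_eq_Ioo (h1.trans h)]; exact ⟨h1, h⟩)
    simpa [min_eq_left hp.le] using this

/-! ### Location of best responses and equilibria -/

/-- Proposing the ideal policy against `y > t` strictly beats every platform below `t`. -/
lemma U_lt_ideal_above {F : ℝ → ℝ} {u : ℝ → ℝ → ℝ} (hF : Fhyp F) (hu : uhyp u) {t y a : ℝ}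
    (ht : t ∈ T) (hy : y ∈ T) (ha : a ∈ T) (h : t < y) (hat : a < t) :
    U F u t a y < U F u t t y := by
  rw [U_eq, U_eq]
  have p1 := P_pos hF ht hy h.ne
  have p2 := P_pos hF ha hy (hat.trans h).ne
  have q1 := u_right hu ht hy le_rfl h
  have q2 := u_left hu ht ha hat le_rfl
  have q3 : P F a y < P F t y := by
    simp only [P, h, hat.trans h, if_true]
    refine hF.2.1 ?_ ?_ (by linarith) <;>
    · simp only [T, mem_Icc] at *; constructor <;> linarith
  nlinarith [mul_pos p2 (sub_pos.2 q2), mul_pos (sub_pos.2 q3) (sub_pos.2 q1)]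

lemma U_lt_ideal_below {F : ℝ → ℝ} {u : ℝ → ℝ → ℝ} (hF : Fhyp F) (hu : uhyp u) {t y a : ℝ}
    (ht : t ∈ T) (hy : y ∈ T) (ha : a ∈ T) (h : y < t) (hat : t < a) :
    U F u t a y < U F u t t y := by
  rw [U_eq, U_eq]
  have p1 := P_pos hF ht hy h.ne'
  have p2 := P_pos hF ha hy (h.trans hat).ne'
  have q1 := u_left hu ht hy h le_rfl
  have q2 := u_right hu ht ha le_rfl hat
  have q3 : P F a y < P F t y := by
    simp only [P, h.not_gt, (h.trans hat).not_gt, h.ne', (h.trans hat).ne', if_false]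
    refine sub_lt_sub_left (hF.2.1 ?_ ?_ (by linarith)) _ <;>
    · simp only [T, mem_Icc] at *; constructor <;> linarith
  nlinarith [mul_pos p2 (sub_pos.2 q2), mul_pos (sub_pos.2 q3) (sub_pos.2 q1)]

/-- Conceding to the opponent (`a = y`), or proposing something worse, yields at most `u y t`,
which is strictly less than what the ideal policy yields. -/
lemma U_lt_ideal_of_le {F : ℝ → ℝ} {u : ℝ → ℝ → ℝ} (hF : Fhyp F) (hu : uhyp u) {t y a : ℝ}
    (ht : t ∈ T) (hy : y ∈ T) (ha : a ∈ T) (h : y ≠ t) (hay : a ≠ y → u a t < u y t) :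
    U F u t a y < U F u t t y := by
  rw [U_eq, U_eq]
  have p1 := P_pos hF ht hy h.symm
  have q1 := hu.2.2 t ht y hy h
  have := mul_pos p1 (sub_pos.2 q1)
  by_cases e : a = y
  · subst e; simpa using this
  · nlinarith [mul_pos (P_pos hF ha hy e) (sub_pos.2 (hay e))]

lemma br_above {F : ℝ → ℝ} {u : ℝ → ℝ → ℝ} (hF : Fhyp F) (hu : uhyp u) {t y a : ℝ}
    (ht : t ∈ T) (hy : y ∈ T) (h : t < y) (ha : a ∈ brL F u t y) : t ≤ a ∧ a < y := by
  refine ⟨?_, ?_⟩ <;> by_contra! hc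
  · exact (U_lt_ideal_above hF hu ht hy ha.1 h hc).not_ge (ha.2 t ht)
  · refine (U_lt_ideal_of_le hF hu ht hy ha.1 h.ne' fun e => ?_).not_ge (ha.2 t ht)
    exact u_right hu ht ha.1 h.le (lt_of_le_of_ne hc (Ne.symm e))

lemma br_below {F : ℝ → ℝ} {u : ℝ → ℝ → ℝ} (hF : Fhyp F) (hu : uhyp u) {t y a : ℝ}
    (ht : t ∈ T) (hy : y ∈ T) (h : y < t) (ha : a ∈ brL F u t y) : y < a ∧ a ≤ t := by
  refine ⟨?_, ?_⟩ <;> by_contra! hc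
  · refine (U_lt_ideal_of_le hF hu ht hy ha.1 h.ne fun e => ?_).not_ge (ha.2 t ht)
    exact u_left hu ht ha.1 (lt_of_le_of_ne hc e) h.le
  · exact (U_lt_ideal_below hF hu ht hy ha.1 h hc).not_ge (ha.2 t ht)

lemma br_self {F : ℝ → ℝ} {u : ℝ → ℝ → ℝ} (hF : Fhyp F) (hu : uhyp u) {t a : ℝ}
    (ht : t ∈ T) (ha : a ∈ brL F u t t) : a = t := by
  by_contra hc
  have := ha.2 t ht
  rw [U_eq, U_eq] at this
  nlinarith [mul_pos (P_pos hF ha.1 ht hc) (sub_pos.2 (hu.2.2 t ht a ha.1 hc))]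

/-- Equilibrium platforms lie between the ideal policies and do not coincide. -/
lemma equil_order {F : ℝ → ℝ} {u : ℝ → ℝ → ℝ} (hF : Fhyp F) (hu : uhyp u) {tl tr : ℝ}
    (htl : tl ∈ T) (htr : tr ∈ T) (h : tl < tr) {p : ℝ × ℝ} (hp : p ∈ E F u tl tr) :
    tl ≤ p.1 ∧ p.1 < p.2 ∧ p.2 ≤ tr := by
  obtain ⟨hl, hr⟩ := hp
  rw [brR_eq] at hr
  rcases lt_trichotomy tl p.2 with h2 | h2 | h2
  · have a := br_above hF hu htl hr.1 h2 hl
    refine ⟨a.1, a.2, ?_⟩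
    rcases lt_trichotomy p.1 tr with h3 | h3 | h3
    · exact (br_below hF hu htr hl.1 h3 hr).2
    · rw [h3] at hr; exact (br_self hF hu htr hr).le
    · have := br_above hF hu htr hl.1 h3 hr; linarith
  · rw [← h2] at hl
    have e := br_self hF hu htl hl
    have := br_below hF hu htr hl.1 (by linarith) hr
    linarith
  · have a := br_below hF hu htl hr.1 h2 hl
    have := br_below hF hu htr hl.1 (by linarith) hr
    linarith

/-! ### Existence of best responses -/

/-- Best responses to `y > t` exist. The winning probability jumps at `x = y`, but on `[t, y]` the
payoff agrees with a
continuous function, and no platform outside `[t, y]` beats `t`. -/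
lemma br_above_nonempty {F : ℝ → ℝ} {u : ℝ → ℝ → ℝ} (hF : Fhyp F) (hu : uhyp u) {t y : ℝ}
    (ht : t ∈ T) (hy : y ∈ T) (h : t < y) : (brL F u t y).Nonempty := by
  have hsub : Icc t y ⊆ T := fun z hz => ⟨ht.1.trans hz.1, hz.2.trans hy.2⟩
  have hg : ContinuousOn (fun x => u y t + F ((x + y) / 2) * (u x t - u y t)) (Icc t y) := by
    have c1 : ContinuousOn (fun x => F ((x + y) / 2)) (Icc t y) :=
      hF.1.comp (by fun_prop) fun z hz => by
        have := hsub hz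
        simp only [T, mem_Icc] at *; constructor <;> linarith
    have c2 : ContinuousOn (fun x => u x t) (Icc t y) :=
      hu.1.comp (f := fun x => (x, t)) (by fun_prop) fun z hz => ⟨hsub hz, ht⟩
    exact continuousOn_const.add (c1.mul (c2.sub continuousOn_const))
  have hU : ∀ x ∈ Icc t y, U F u t x y = u y t + F ((x + y) / 2) * (u x t - u y t) := by
    intro x hx
    rw [U_eq]
    rcases hx.2.lt_or_eq with e | e
    · simp [P, e]
    · subst e; simp
  obtain ⟨m, hm, hmax⟩ := isCompact_Icc.exists_isMaxOn ⟨t, le_rfl, h.le⟩ hg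
  have hmt : ∀ x ∈ Icc t y, U F u t x y ≤ U F u t m y := fun x hx => by
    rw [hU x hx, hU m hm]; exact hmax hx
  refine ⟨m, hsub hm, fun z hz => ?_⟩
  have hmt0 := hmt t ⟨le_rfl, h.le⟩
  rcases lt_or_ge z t with e | e
  · exact (U_lt_ideal_above hF hu ht hy hz h e).le.trans hmt0
  rcases le_or_gt z y with e' | e'
  · exact hmt z ⟨e, e'⟩
  · exact (U_lt_ideal_of_le hF hu ht hy hz h.ne'
      fun _ => u_right hu ht hz h.le e').le.trans hmt0

lemma br_below_nonempty {F : ℝ → ℝ} {u : ℝ → ℝ → ℝ} (hF : Fhyp F) (hu : uhyp u) {t y : ℝ}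
    (ht : t ∈ T) (hy : y ∈ T) (h : y < t) : (brL F u t y).Nonempty := by
  have hsub : Icc y t ⊆ T := fun z hz => ⟨hy.1.trans hz.1, hz.2.trans ht.2⟩
  have hg : ContinuousOn (fun x => u y t + (1 - F ((x + y) / 2)) * (u x t - u y t)) (Icc y t) := by
    have c1 : ContinuousOn (fun x => F ((x + y) / 2)) (Icc y t) :=
      hF.1.comp (by fun_prop) fun z hz => by
        have := hsub hz
        simp only [T, mem_Icc] at *; constructor <;> linarith
    have c2 : ContinuousOn (fun x => u x t) (Icc y t) :=
      hu.1.comp (f := fun x => (x, t)) (by fun_prop) fun z hz => ⟨hsub hz, ht⟩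
    exact continuousOn_const.add ((continuousOn_const.sub c1).mul (c2.sub continuousOn_const))
  have hU : ∀ x ∈ Icc y t, U F u t x y = u y t + (1 - F ((x + y) / 2)) * (u x t - u y t) := by
    intro x hx
    rw [U_eq]
    rcases hx.1.lt_or_eq with e | e
    · simp [P, e.not_gt, e.ne']
    · subst e; simp
  obtain ⟨m, hm, hmax⟩ := isCompact_Icc.exists_isMaxOn ⟨t, h.le, le_rfl⟩ hg
  have hmt : ∀ x ∈ Icc y t, U F u t x y ≤ U F u t m y := fun x hx => by
    rw [hU x hx, hU m hm]; exact hmax hx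
  refine ⟨m, hsub hm, fun z hz => ?_⟩
  have hmt0 := hmt t ⟨h.le, le_rfl⟩
  rcases lt_or_ge t z with e | e
  · exact (U_lt_ideal_below hF hu ht hy hz h e).le.trans hmt0
  rcases le_or_gt y z with e' | e'
  · exact hmt z ⟨e', e⟩
  · exact (U_lt_ideal_of_le hF hu ht hy hz h.ne
      fun _ => u_left hu ht hz e' h.le).le.trans hmt0

/-! ### Monotonicity of best responses -/

/-- Under SSCP every best response to a higher opponent platform dominates every best response to
a lower one; in particular every selection is monotone. -/
lemma brL_mono {F : ℝ → ℝ} {u : ℝ → ℝ → ℝ} (hF : Fhyp F) (hu : uhyp u) (hS : SSCP F u)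
    {t y y' a b : ℝ} (ht : t ∈ T) (hy : y ∈ T) (hy' : y' ∈ T) (h : t < y) (hyy : y < y')
    (ha : a ∈ brL F u t y) (hb : b ∈ brL F u t y') : a ≤ b := by
  by_contra! hc
  have h1 := br_above hF hu ht hy h ha
  have h2 := br_above hF hu ht hy' (h.trans hyy) hb
  have := (hS t b a y y' y' ht hb.1 ha.1 hy hy' hy' h2.1 hc h1.2 hyy le_rfl).1 (ha.2 b hb.1)
  exact this.not_ge (hb.2 a ha.1)

lemma brR_mono {F : ℝ → ℝ} {u : ℝ → ℝ → ℝ} (hF : Fhyp F) (hu : uhyp u) (hS : SSCP F u)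
    {t y y' a b : ℝ} (ht : t ∈ T) (hy : y ∈ T) (hy' : y' ∈ T) (h : y' < t) (hyy : y < y')
    (ha : a ∈ brL F u t y) (hb : b ∈ brL F u t y') : a ≤ b := by
  by_contra! hc
  have h1 := br_below hF hu ht hy (hyy.trans h) ha
  have h2 := br_below hF hu ht hy' h hb
  rw [← brR_eq] at ha hb
  have := (hS y y y' b a t hy hy hy' hb.1 ha.1 ht le_rfl hyy h2.1 hc h1.2).2 (hb.2 a ha.1)
  exact this.not_ge (ha.2 b hb.1)

/-- A strictly larger relative gain from proposing `a` rather than `b` turns a weak preference for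
`a` into a strict one. -/
lemma ratio_aux {p q A B A' B' : ℝ} (hp : 0 < p) (hB : 0 < B) (hB' : 0 < B')
    (h : A' / B' > A / B) (hopt : q * B ≤ p * A) : q * B' < p * A' := by
  rw [gt_iff_lt, div_lt_div_iff₀ hB hB'] at h
  have h1 : q * B * B' ≤ p * A * B' := mul_le_mul_of_nonneg_right hopt hB'.le
  have h2 : p * (A * B') < p * (A' * B) := mul_lt_mul_of_pos_left h hp
  refine lt_of_mul_lt_mul_right (a := B) ?_ hB.le
  linarith

lemma brL_mono_ideal {F : ℝ → ℝ} {u : ℝ → ℝ → ℝ} (hF : Fhyp F) (hu : uhyp u) (hS : SLS u)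
    {t t' y a b : ℝ} (ht : t ∈ T) (ht' : t' ∈ T) (hy : y ∈ T) (htt : t < t') (h : t' < y)
    (ha : a ∈ brL F u t y) (hb : b ∈ brL F u t' y) : a ≤ b := by
  by_contra! hc
  have h1 := br_above hF hu ht hy (htt.trans h) ha
  have h2 := br_above hF hu ht' hy h hb
  have hr := hS t t' b a y ht ht' hb.1 ha.1 hy (Or.inl ⟨htt, h2.1, hc, h1.2⟩)
  have o1 := ha.2 b hb.1
  have o2 := hb.2 a ha.1
  rw [U_eq, U_eq] at o1 o2
  have := ratio_aux (q := P F b y) (P_pos hF ha.1 hy h1.2.ne)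
    (sub_pos.2 (u_right hu ht hy (htt.le.trans h2.1) h2.2))
    (sub_pos.2 (u_right hu ht' hy h2.1 h2.2)) hr (by linarith)
  linarith

lemma brR_mono_ideal {F : ℝ → ℝ} {u : ℝ → ℝ → ℝ} (hF : Fhyp F) (hu : uhyp u) (hS : SLS u)
    {t t' y a b : ℝ} (ht : t ∈ T) (ht' : t' ∈ T) (hy : y ∈ T) (htt : t < t') (h : y < t)
    (ha : a ∈ brL F u t y) (hb : b ∈ brL F u t' y) : a ≤ b := by
  by_contra! hc
  have h1 := br_below hF hu ht hy h ha
  have h2 := br_below hF hu ht' hy (h.trans htt) hb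
  have hr := hS t t' b a y ht ht' hb.1 ha.1 hy (Or.inr ⟨h2.1, hc, h1.2, htt⟩)
  have o1 := ha.2 b hb.1
  have o2 := hb.2 a ha.1
  rw [U_eq, U_eq] at o1 o2
  have := ratio_aux (q := P F b y) (P_pos hF ha.1 hy h1.1.ne')
    (sub_pos.2 (u_left hu ht hy h2.1 (hc.le.trans h1.2)))
    (sub_pos.2 (u_left hu ht' hy h2.1 h2.2)) hr (by linarith)
  linarith

/-! ### Equilibria of the game with a raised ideal point -/

lemma exists_fixed_mono {h : ℝ → ℝ} {a c : ℝ} (hac : a ≤ c) (ha : a ≤ h a)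
    (hc : ∀ x ∈ Icc a c, h x ≤ c) (hm : MonotoneOn h (Icc a c)) :
    ∃ s ∈ Icc a c, h s = s := by
  have hmem : a ∈ {x | x ∈ Icc a c ∧ x ≤ h x} := ⟨⟨le_rfl, hac⟩, ha⟩
  have hbdd : BddAbove {x | x ∈ Icc a c ∧ x ≤ h x} := ⟨c, fun x hx => hx.1.2⟩
  set s := sSup {x | x ∈ Icc a c ∧ x ≤ h x} with hs
  have hsI : s ∈ Icc a c := ⟨le_csSup hbdd hmem, csSup_le ⟨a, hmem⟩ fun x hx => hx.1.2⟩
  have h1 : s ≤ h s :=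
    csSup_le ⟨a, hmem⟩ fun x hx => hx.2.trans (hm hx.1 hsI (le_csSup hbdd hx))
  have hhs : h s ∈ Icc a c := ⟨hsI.1.trans h1, hc s hsI⟩
  exact ⟨s, hsI, le_antisymm (le_csSup hbdd ⟨hhs, hm hsI hhs h1⟩) h1⟩

/-- A selection from the sets `B x`, `x ∈ S`, through a prescribed point of the graph. -/
lemma exists_selection {B : ℝ → Set ℝ} {S : Set ℝ} (hB : ∀ x ∈ S, (B x).Nonempty) {a b : ℝ}
    (hb : b ∈ B a) : ∃ f : ℝ → ℝ, f a = b ∧ ∀ x ∈ S, f x ∈ B x := by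
  have : ∀ x, ∃ y, (x = a → y = b) ∧ (x ∈ S → y ∈ B x) := by
    intro x
    by_cases e : x = a
    · exact ⟨b, fun _ => rfl, fun _ => e ▸ hb⟩
    · by_cases hx : x ∈ S
      · obtain ⟨y, hy⟩ := hB x hx
        exact ⟨y, fun h => absurd h e, fun _ => hy⟩
      · exact ⟨b, fun _ => rfl, fun h => absurd h hx⟩
  choose f hf using this
  exact ⟨f, (hf a).1 rfl, fun x => (hf x).2⟩

/-- Raising the left ideal point: an equilibrium of the new game with a higher left platform. -/
lemma exists_equil_left {F : ℝ → ℝ} {u : ℝ → ℝ → ℝ} (hF : Fhyp F) (hu : uhyp u)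
    (hSSCP : SSCP F u) (hSLS : SLS u) {tl tl' tr : ℝ} (htl : tl ∈ T) (htl' : tl' ∈ T)
    (htr : tr ∈ T) (h1 : tl < tl') (h2 : tl' < tr) {p : ℝ × ℝ} (hp : p ∈ E F u tl tr)
    (hlt : tl' < p.1) : ∃ q ∈ E F u tl' tr, p.1 ≤ q.1 := by
  obtain ⟨-, o2, o3⟩ := equil_order hF hu htl htr (h1.trans h2) hp
  obtain ⟨hl, hr⟩ := hp
  rw [brR_eq] at hr
  obtain ⟨R, hRa, hR⟩ := exists_selection (S := {x | x ∈ T ∧ x < tr})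
    (fun x hx => br_below_nonempty hF hu htr hx.1 hx.2) hr
  obtain ⟨c, hcbr⟩ := br_above_nonempty hF hu htl' htr h2
  obtain ⟨L, hLc, hL⟩ := exists_selection (S := {y | y ∈ T ∧ tl' < y})
    (fun x hx => br_above_nonempty hF hu htl' hx.1 hx.2) hcbr
  have hRm : ∀ x x', x ∈ T → x' < tr → x' ∈ T → x ≤ x' → R x ≤ R x' := by
    intro x x' hx hx't hx' hxx
    rcases hxx.eq_or_lt with e | e
    · rw [e]
    · exact brR_mono hF hu hSSCP htr hx hx' hx't e (hR x ⟨hx, e.trans hx't⟩) (hR x' ⟨hx', hx't⟩)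
  have hLm : ∀ y y', y ∈ T → tl' < y → y' ∈ T → y ≤ y' → L y ≤ L y' := by
    intro y y' hy hyt hy' hyy
    rcases hyy.eq_or_lt with e | e
    · rw [e]
    · exact brL_mono hF hu hSSCP htl' hy hy' hyt e (hL y ⟨hy, hyt⟩) (hL y' ⟨hy', hyt.trans e⟩)
  have hct := (br_above hF hu htl' htr h2 hcbr).2
  have hLa : p.1 ≤ L p.2 :=
    brL_mono_ideal hF hu hSLS htl htl' hr.1 h1 (hlt.trans o2) hl (hL _ ⟨hr.1, hlt.trans o2⟩)
  have hac : p.1 ≤ c := hLa.trans (hLc ▸ hLm p.2 tr hr.1 (hlt.trans o2) htr o3)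
  -- The interval stops at `c = L tr < tr`, so that `R` is only used strictly below `tr`.
  have hsub : ∀ x ∈ Icc p.1 c, x ∈ T ∧ x < tr := fun x hx =>
    ⟨⟨hl.1.1.trans hx.1, hx.2.trans hcbr.1.2⟩, hx.2.trans_lt hct⟩
  have hRx : ∀ x ∈ Icc p.1 c, R x ∈ T ∧ tl' < R x ∧ R x ≤ tr := fun x hx => by
    have m := hR x (hsub x hx)
    have b := br_below hF hu htr (hsub x hx).1 (hsub x hx).2 m
    exact ⟨m.1, hlt.trans_le (hx.1.trans b.1.le), b.2⟩
  obtain ⟨s, hs, hfix⟩ := exists_fixed_mono (h := fun x => L (R x)) hac (by simpa [hRa] using hLa)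
    (fun x hx => hLc ▸ hLm _ _ (hRx x hx).1 (hRx x hx).2.1 htr (hRx x hx).2.2)
    (fun x hx y hy hxy => hLm _ _ (hRx x hx).1 (hRx x hx).2.1 (hRx y hy).1
      (hRm x y (hsub x hx).1 (hsub y hy).2 (hsub y hy).1 hxy))
  refine ⟨(s, R s), ⟨?_, ?_⟩, hs.1⟩
  · have := hL (R s) ⟨(hRx s hs).1, (hRx s hs).2.1⟩
    rwa [hfix] at this
  · rw [brR_eq]; exact hR s (hsub s hs)

/-- Raising the right ideal point: an equilibrium of the new game with a higher right platform. -/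
lemma exists_equil_right {F : ℝ → ℝ} {u : ℝ → ℝ → ℝ} (hF : Fhyp F) (hu : uhyp u)
    (hSSCP : SSCP F u) (hSLS : SLS u) {tl tr tr' : ℝ} (htl : tl ∈ T) (htr : tr ∈ T)
    (htr' : tr' ∈ T) (h1 : tl < tr) (h2 : tr < tr') {p : ℝ × ℝ} (hp : p ∈ E F u tl tr) :
    ∃ q ∈ E F u tl tr', p.2 ≤ q.2 := by
  obtain ⟨o1, o2, o3⟩ := equil_order hF hu htl htr h1 hp
  obtain ⟨hl, hr⟩ := hp
  rw [brR_eq] at hr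
  obtain ⟨L, hLa, hL⟩ := exists_selection (S := {y | y ∈ T ∧ tl < y})
    (fun x hx => br_above_nonempty hF hu htl hx.1 hx.2) hl
  have hne : ∀ x ∈ {x | x ∈ T ∧ x < tr'}, (brL F u tr' x).Nonempty :=
    fun x hx => br_below_nonempty hF hu htr' hx.1 hx.2
  choose! R hR using hne
  have hsub : ∀ y ∈ Icc p.2 tr', y ∈ T ∧ tl < y := fun y hy =>
    ⟨⟨hr.1.1.trans hy.1, hy.2.trans htr'.2⟩, (o1.trans_lt o2).trans_le hy.1⟩
  have hLy : ∀ y ∈ Icc p.2 tr', L y ∈ T ∧ L y < tr' := fun y hy => by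
    have m := hL y (hsub y hy)
    exact ⟨m.1, (br_above hF hu htl (hsub y hy).1 (hsub y hy).2 m).2.trans_le hy.2⟩
  obtain ⟨s, hs, hfix⟩ := exists_fixed_mono (h := fun y => R (L y)) (a := p.2) (c := tr')
    (o3.trans h2.le)
    (by
      have hlt : p.1 < tr := o2.trans_le o3
      simpa [hLa] using brR_mono_ideal hF hu hSLS htr htr' hl.1 h2 hlt hr
        (hR p.1 ⟨hl.1, hlt.trans h2⟩))
    (fun y hy => (br_below hF hu htr' (hLy y hy).1 (hLy y hy).2 (hR _ (hLy y hy))).2)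
    (by
      intro x hx y hy hxy
      have hLL : L x ≤ L y := by
        rcases hxy.eq_or_lt with e | e
        · rw [e]
        · exact brL_mono hF hu hSSCP htl (hsub x hx).1 (hsub y hy).1 (hsub x hx).2 e
            (hL x (hsub x hx)) (hL y (hsub y hy))
      rcases hLL.eq_or_lt with e | e
      · simp only [e, le_refl]
      · exact brR_mono hF hu hSSCP htr' (hLy x hx).1 (hLy y hy).1 (hLy y hy).2 e
          (hR _ (hLy x hx)) (hR _ (hLy y hy)))
  refine ⟨(L s, s), ⟨hL s (hsub s hs), ?_⟩, hs.1⟩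
  rw [brR_eq]
  have := hR (L s) (hLy s hs)
  rwa [hfix] at this

/-- Under SSCP and SLS, the greatest equilibrium platforms are increasing in
the candidates' ideal policies. -/
theorem greatest_equilibrium_monotone (F : ℝ → ℝ) (u : ℝ → ℝ → ℝ)
    (hF : Fhyp F) (hu : uhyp u) (hSSCP : SSCP F u) (hSLS : SLS u)
    (tl tl' tr tr' : ℝ)
    (htl : tl ∈ T) (htl' : tl' ∈ T) (htr : tr ∈ T) (htr' : tr' ∈ T)
    (h1 : tl < tl') (h2 : tl' < tr) (h3 : tr < tr')
    (xb yb zb : ℝ × ℝ)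
    (hx : IsGreatest (E F u tl tr) xb)
    (hy : IsGreatest (E F u tl' tr) yb)
    (hz : IsGreatest (E F u tl tr') zb) :
    yb.1 ≥ xb.1 ∧ zb.2 ≥ xb.2 := by
  refine ⟨?_, ?_⟩
  · rcases le_or_gt xb.1 tl' with h | h
    · exact h.trans (equil_order hF hu htl' htr h2 hy.1).1
    · obtain ⟨q, hq, hle⟩ := exists_equil_left hF hu hSSCP hSLS htl htl' htr h1 h2 hx.1 h
      exact hle.trans (hy.2 hq).1
  · obtain ⟨q, hq, hle⟩ := exists_equil_right hF hu hSSCP hSLS htl htr htr' (h1.trans h2) h3 hx.1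
    exact hle.trans (hz.2 hq).2
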